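/- Consider the two-setting two-outcome qubit assemblage σ_{1|1} = 0.3 • |0⟩⟨0|, σ_{2|1} = 0.2 • |0⟩⟨0| + 0.5 • |1⟩⟨1|, σ_{1|2} = 0.3 • |+⟩⟨+|, σ_{2|2} = 0.2 • |+⟩⟨+| + 0.5 • |−⟩⟨−|. For every pair of two-outcome POVMs {E_{1|x}, E_{2|x}} (x ∈ {1,2}) on ℂ², the CHSH value S = ⟨1,1⟩ + ⟨1,2⟩ + ⟨2,1⟩ − ⟨2,2⟩ satisfies S ≤ 2, where ⟨x,y⟩ = ∑_{a,b ∈ {1,2}} (−1)^{a+b} Re tr(E_{a|x} * σ_{b|y}). -/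

import Mathlib

open scoped BigOperators Matrix ComplexOrder Kronecker ComplexConjugate

/-- A POVM on `ℂ^d` with outcome set `B`: positive semidefinite effects summing to `1`. -/
def IsPOVM {d : ℕ} {B : Type} [Fintype B] (E : B → Matrix (Fin d) (Fin d) ℂ) : Prop :=
  (∀ b, (E b).PosSemidef) ∧ ∑ b, E b = 1

/-- A family of POVMs `E b y` (outcome `b`, setting `y`) on `ℂ^d` is jointly measurable
if it arises from a single POVM `G` by classical post-processing. -/
def JointlyMeasurable {d : ℕ} {B Y : Type} [Fintype B] [Fintype Y]
    (E : B → Y → Matrix (Fin d) (Fin d) ℂ) : Prop :=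
  ∃ (n : ℕ) (G : Fin n → Matrix (Fin d) (Fin d) ℂ) (p : B → Y → Fin n → ℝ),
    IsPOVM G ∧ (∀ b y l, 0 ≤ p b y l) ∧ (∀ y l, ∑ b, p b y l = 1) ∧
    (∀ b y, E b y = ∑ l, p b y l • G l)

/-- An assemblage `σ b y` on `ℂ^d` is unsteerable if it admits a local-hidden-state model. -/
def Unsteerable {d : ℕ} {B Y : Type} [Fintype B] [Fintype Y]
    (σ : B → Y → Matrix (Fin d) (Fin d) ℂ) : Prop :=
  ∃ (n : ℕ) (τ : Fin n → Matrix (Fin d) (Fin d) ℂ) (p : B → Y → Fin n → ℝ),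
    (∀ l, (τ l).PosSemidef) ∧ (∑ l, (τ l).trace = 1) ∧
    (∀ b y l, 0 ≤ p b y l) ∧ (∀ y l, ∑ b, p b y l = 1) ∧
    (∀ b y, σ b y = ∑ l, p b y l • τ l)

/-- `|0⟩`. -/
noncomputable def ket0 : Fin 2 → ℂ := ![1, 0]
/-- `|1⟩`. -/
noncomputable def ket1 : Fin 2 → ℂ := ![0, 1]
/-- `|+⟩ = (|0⟩ + |1⟩)/√2`. -/
noncomputable def ketP : Fin 2 → ℂ := ![(Real.sqrt 2 : ℂ)⁻¹, (Real.sqrt 2 : ℂ)⁻¹]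
/-- `|−⟩ = (|0⟩ − |1⟩)/√2`. -/
noncomputable def ketM : Fin 2 → ℂ := ![(Real.sqrt 2 : ℂ)⁻¹, -(Real.sqrt 2 : ℂ)⁻¹]

/-- `|ψ⟩⟨ψ|`. -/
noncomputable def proj (ψ : Fin 2 → ℂ) : Matrix (Fin 2) (Fin 2) ℂ :=
  Matrix.vecMulVec ψ (star ψ)

/-- The explicit two-setting two-outcome qubit assemblage
`σ_{1|1} = 0.3|0⟩⟨0|`, `σ_{2|1} = 0.2|0⟩⟨0| + 0.5|1⟩⟨1|`,
`σ_{1|2} = 0.3|+⟩⟨+|`, `σ_{2|2} = 0.2|+⟩⟨+| + 0.5|−⟩⟨−|`,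
with outcome `b : Fin 2` (0 ↦ 1, 1 ↦ 2) and setting `y : Fin 2` (0 ↦ 1, 1 ↦ 2). -/
noncomputable def exampleAssemblage : Fin 2 → Fin 2 → Matrix (Fin 2) (Fin 2) ℂ :=
  fun b y =>
    if y = 0 then
      if b = 0 then (0.3 : ℝ) • proj ket0
      else (0.2 : ℝ) • proj ket0 + (0.5 : ℝ) • proj ket1
    else
      if b = 0 then (0.3 : ℝ) • proj ketP
      else (0.2 : ℝ) • proj ketP + (0.5 : ℝ) • proj ketM

/-- The correlator `⟨x,y⟩ = ∑_{a,b} (-1)^(a+b) Re tr(E_{a|x} σ_{b|y})` for the explicit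
assemblage, with `a b : Fin 2` standing for outcomes `1, 2`. -/
noncomputable def chshCorr (E : Fin 2 → Fin 2 → Matrix (Fin 2) (Fin 2) ℂ)
    (x y : Fin 2) : ℝ :=
  ∑ a : Fin 2, ∑ b : Fin 2,
    (-1 : ℝ) ^ ((a : ℕ) + (b : ℕ)) * ((E a x * exampleAssemblage b y).trace).re

/-!
Write `A x = E_{1|x} - E_{2|x}` and `D y = σ_{1|y} - σ_{2|y}`. The CHSH value is
`tr (A 1 (D 1 + D 2)) + tr (A 2 (D 1 - D 2))`, and `tr (A x H)` is at most the trace norm of `H`.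
Instead of diagonalising `H` we bound it in the Loewner order: if `-K ≤ H ≤ K`, then
`tr K - tr (A x H) = tr (E_{1|x} (K - H)) + tr (E_{2|x} (K + H)) ≥ 0`. Here
`D 1 + D 2 = -2/5 + (3√2/10) U` and `D 1 - D 2 = (3√2/10) V` with `U` and `V` traceless Hermitian
involutions, and `K = 3√2/10 - (2/5) U`, respectively `K = 3√2/10`, gives the bound `6√2/5 < 2`.
-/

section PosSemidef

variable {n 𝕜 : Type*} [Fintype n] [RCLike 𝕜]

open scoped MatrixOrder Matrix.Norms.L2Operator in
theorem trace_mul_nonneg_of_posSemidef {A B : Matrix n n 𝕜}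
    (hA : A.PosSemidef) (hB : B.PosSemidef) : 0 ≤ (A * B).trace := by
  classical
  obtain ⟨C, rfl⟩ := CStarAlgebra.nonneg_iff_eq_star_mul_self.mp hA.nonneg
  rw [← Matrix.trace_mul_cycle]
  exact (hB.mul_mul_conjTranspose_same C).trace_nonneg

variable [DecidableEq n]

theorem posSemidef_one_add_of_mul_self_eq_one {U : Matrix n n 𝕜}
    (hU : U.IsHermitian) (hUU : U * U = 1) : (1 + U).PosSemidef := by
  have hsq : 1 + U = (2⁻¹ : ℝ) • ((1 + U)ᴴ * (1 + U)) := by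
    rw [Matrix.conjTranspose_add, Matrix.conjTranspose_one, hU.eq, add_mul, mul_add, mul_add, hUU,
      one_mul, mul_one, one_mul]
    module
  rw [hsq]
  exact (Matrix.posSemidef_conjTranspose_mul_self _).smul (by norm_num)

theorem posSemidef_one_sub_of_mul_self_eq_one {U : Matrix n n 𝕜}
    (hU : U.IsHermitian) (hUU : U * U = 1) : (1 - U).PosSemidef := by
  rw [sub_eq_add_neg]
  exact posSemidef_one_add_of_mul_self_eq_one hU.neg (by rw [neg_mul_neg, hUU])

end PosSemidef

namespace IsPOVM

variable {d : ℕ} {E : Fin 2 → Matrix (Fin d) (Fin d) ℂ}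

theorem re_trace_sub_mul_le (hE : IsPOVM E) {H K : Matrix (Fin d) (Fin d) ℂ}
    (hsub : (K - H).PosSemidef) (hadd : (K + H).PosSemidef) :
    ((E 0 - E 1) * H).trace.re ≤ K.trace.re := by
  have hgap : K - (E 0 - E 1) * H = E 0 * (K - H) + E 1 * (K + H) := by
    have hsum : E 0 + E 1 = 1 := by simpa only [Fin.sum_univ_two] using hE.2
    calc K - (E 0 - E 1) * H = (E 0 + E 1) * K - (E 0 - E 1) * H := by rw [hsum, one_mul]
      _ = E 0 * (K - H) + E 1 * (K + H) := by noncomm_ring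
  have hnonneg : 0 ≤ (K - (E 0 - E 1) * H).trace := by
    rw [hgap, Matrix.trace_add]
    exact add_nonneg (trace_mul_nonneg_of_posSemidef (hE.1 0) hsub)
      (trace_mul_nonneg_of_posSemidef (hE.1 1) hadd)
  rw [Matrix.trace_sub] at hnonneg
  exact (Complex.le_def.mp (sub_nonneg.mp hnonneg)).1

theorem re_trace_sub_mul_smul_one_add_smul_le (hE : IsPOVM E) {U : Matrix (Fin d) (Fin d) ℂ}
    (hU : U.IsHermitian) (hUU : U * U = 1) {α β : ℝ} (hαβ : |α| ≤ β) :
    ((E 0 - E 1) * (α • 1 + β • U)).trace.re ≤ β * d + α * U.trace.re := by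
  obtain ⟨hneg, hpos⟩ := abs_le.mp hαβ
  -- `β + αU` dominates `±(α + βU)` because the differences factor through `1 ∓ U`.
  have hsub : (β • 1 + α • U - (α • 1 + β • U)).PosSemidef := by
    rw [show β • 1 + α • U - (α • 1 + β • U) = (β - α) • (1 - U) by module]
    exact (posSemidef_one_sub_of_mul_self_eq_one hU hUU).smul (sub_nonneg.mpr hpos)
  have hadd : (β • 1 + α • U + (α • 1 + β • U)).PosSemidef := by
    rw [show β • 1 + α • U + (α • 1 + β • U) = (β + α) • (1 + U) by module]
    exact (posSemidef_one_add_of_mul_self_eq_one hU hUU).smul (by linarith)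
  simpa using hE.re_trace_sub_mul_le hsub hadd

end IsPOVM

/-- The Pauli matrix `σ_x`, for the Bloch decomposition of real qubit operators. -/
def pauliX : Matrix (Fin 2) (Fin 2) ℂ := !![0, 1; 1, 0]

/-- The Pauli matrix `σ_z`, for the Bloch decomposition of real qubit operators. -/
def pauliZ : Matrix (Fin 2) (Fin 2) ℂ := !![1, 0; 0, -1]

theorem pauliX_isHermitian : pauliX.IsHermitian := by
  ext i j
  fin_cases i <;> fin_cases j <;> simp [pauliX]

theorem pauliZ_isHermitian : pauliZ.IsHermitian := by
  ext i j
  fin_cases i <;> fin_cases j <;> simp [pauliZ]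

theorem trace_pauliX : pauliX.trace = 0 := by
  simp [pauliX, Matrix.trace_fin_two]

theorem trace_pauliZ : pauliZ.trace = 0 := by
  simp [pauliZ, Matrix.trace_fin_two]

theorem pauliX_mul_self : pauliX * pauliX = 1 := by
  simp [pauliX, Matrix.one_fin_two]

theorem pauliZ_mul_self : pauliZ * pauliZ = 1 := by
  simp [pauliZ, Matrix.one_fin_two]

theorem pauliX_mul_pauliZ : pauliX * pauliZ = -(pauliZ * pauliX) := by
  simp [pauliX, pauliZ]

theorem smul_pauliZ_add_smul_pauliX_mul_self (z x : ℝ) :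
    (z • pauliZ + x • pauliX) * (z • pauliZ + x • pauliX) = (z ^ 2 + x ^ 2) • 1 := by
  simp only [add_mul, mul_add, smul_mul_smul_comm, pauliX_mul_self, pauliZ_mul_self,
    pauliX_mul_pauliZ]
  module

theorem IsPOVM.re_trace_sub_mul_bloch_le {E : Fin 2 → Matrix (Fin 2) (Fin 2) ℂ} (hE : IsPOVM E)
    {α z x : ℝ} (hα : |α| ≤ √(z ^ 2 + x ^ 2)) :
    ((E 0 - E 1) * (α • 1 + (z • pauliZ + x • pauliX))).trace.re ≤ 2 * √(z ^ 2 + x ^ 2) := by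
  set r := √(z ^ 2 + x ^ 2) with hr
  set V := z • pauliZ + x • pauliX with hV
  have hVH : V.IsHermitian :=
    (pauliZ_isHermitian.smul (.all z)).add (pauliX_isHermitian.smul (.all x))
  have hVtr : V.trace = 0 := by simp [hV, trace_pauliX, trace_pauliZ]
  have hVV : V * V = r ^ 2 • 1 := by
    rw [hr, Real.sq_sqrt (by positivity), hV, smul_pauliZ_add_smul_pauliX_mul_self]
  rcases (Real.sqrt_nonneg _ : 0 ≤ r).eq_or_lt with hr0 | hrpos
  · have hzx : z ^ 2 + x ^ 2 = 0 := (Real.sqrt_eq_zero (by positivity)).mp hr0.symm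
    obtain ⟨hz, hx⟩ : z = 0 ∧ x = 0 := by
      simpa [add_eq_zero_iff_of_nonneg, sq_nonneg] using hzx
    have hα0 : α = 0 := abs_nonpos_iff.mp (hr0 ▸ hα)
    simp [hV, hz, hx, hα0, hr]
  · have hUU : (r⁻¹ • V) * (r⁻¹ • V) = 1 := by
      rw [smul_mul_smul_comm, hVV, smul_smul, ← sq, ← mul_pow, inv_mul_cancel₀ hrpos.ne',
        one_pow, one_smul]
    have h := hE.re_trace_sub_mul_smul_one_add_smul_le (hVH.smul (.all r⁻¹)) hUU hα
    rw [smul_inv_smul₀ hrpos.ne'] at h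
    simpa [hVtr, mul_comm] using h

theorem proj_ofReal (z x : ℝ) :
    proj ![(z : ℂ), (x : ℂ)] =
      ((z ^ 2 + x ^ 2) / 2) • 1 + (((z ^ 2 - x ^ 2) / 2) • pauliZ + (z * x) • pauliX) := by
  ext i j
  fin_cases i <;> fin_cases j <;> simp [proj, pauliX, pauliZ, Matrix.vecMulVec_apply] <;> ring

theorem proj_ket0 : proj ket0 = (1 / 2 : ℝ) • (1 + pauliZ) := by
  simpa [ket0] using proj_ofReal 1 0

theorem proj_ket1 : proj ket1 = (1 / 2 : ℝ) • (1 - pauliZ) := by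
  simpa [ket1, smul_sub, neg_div, ← sub_eq_add_neg] using proj_ofReal 0 1

theorem proj_ketP : proj ketP = (1 / 2 : ℝ) • (1 + pauliX) := by
  simpa [ketP, ← sq] using proj_ofReal (√2)⁻¹ (√2)⁻¹

theorem proj_ketM : proj ketM = (1 / 2 : ℝ) • (1 - pauliX) := by
  simpa [ketM, ← sq, smul_sub, ← sub_eq_add_neg] using proj_ofReal (√2)⁻¹ (-(√2)⁻¹)

theorem exampleAssemblage_zero_sub_one_setting_zero :
    exampleAssemblage 0 0 - exampleAssemblage 1 0 =
      (-1 / 5 : ℝ) • 1 + (3 / 10 : ℝ) • pauliZ := by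
  simp only [exampleAssemblage, if_true, one_ne_zero, if_false, proj_ket0, proj_ket1]
  module

theorem exampleAssemblage_zero_sub_one_setting_one :
    exampleAssemblage 0 1 - exampleAssemblage 1 1 =
      (-1 / 5 : ℝ) • 1 + (3 / 10 : ℝ) • pauliX := by
  simp only [exampleAssemblage, if_true, one_ne_zero, if_false, proj_ketP, proj_ketM]
  module

theorem chshCorr_eq_re_trace (E : Fin 2 → Fin 2 → Matrix (Fin 2) (Fin 2) ℂ) (x y : Fin 2) :
    chshCorr E x y =
      ((E 0 x - E 1 x) * (exampleAssemblage 0 y - exampleAssemblage 1 y)).trace.re := by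
  simp only [chshCorr, Fin.sum_univ_two, sub_mul, mul_sub, Matrix.trace_sub, Complex.sub_re,
    Fin.val_zero, Fin.val_one]
  ring

theorem chsh_eq_re_trace_add_re_trace (E : Fin 2 → Fin 2 → Matrix (Fin 2) (Fin 2) ℂ) :
    chshCorr E 0 0 + chshCorr E 0 1 + chshCorr E 1 0 - chshCorr E 1 1 =
      ((E 0 0 - E 1 0) * ((-2 / 5 : ℝ) • 1 +
        ((3 / 10 : ℝ) • pauliZ + (3 / 10 : ℝ) • pauliX))).trace.re +
      ((E 0 1 - E 1 1) * ((0 : ℝ) • 1 +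
        ((3 / 10 : ℝ) • pauliZ + (-3 / 10 : ℝ) • pauliX))).trace.re := by
  have hadd : (-2 / 5 : ℝ) • 1 + ((3 / 10 : ℝ) • pauliZ + (3 / 10 : ℝ) • pauliX) =
      (exampleAssemblage 0 0 - exampleAssemblage 1 0) +
        (exampleAssemblage 0 1 - exampleAssemblage 1 1) := by
    rw [exampleAssemblage_zero_sub_one_setting_zero, exampleAssemblage_zero_sub_one_setting_one]
    module
  have hsub : (0 : ℝ) • 1 + ((3 / 10 : ℝ) • pauliZ + (-3 / 10 : ℝ) • pauliX) =
      (exampleAssemblage 0 0 - exampleAssemblage 1 0) -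
        (exampleAssemblage 0 1 - exampleAssemblage 1 1) := by
    rw [exampleAssemblage_zero_sub_one_setting_zero, exampleAssemblage_zero_sub_one_setting_one]
    module
  simp only [hadd, hsub, chshCorr_eq_re_trace, mul_add, mul_sub (E 0 1 - E 1 1), Matrix.trace_add,
    Matrix.trace_sub, Complex.add_re, Complex.sub_re]
  ring

/-- no pair of qubit POVMs `E_{a|x}` gives a CHSH violation with the
explicit assemblage: `⟨1,1⟩ + ⟨1,2⟩ + ⟨2,1⟩ − ⟨2,2⟩ ≤ 2`. -/
theorem exampleAssemblage_no_CHSH_violation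
    (E : Fin 2 → Fin 2 → Matrix (Fin 2) (Fin 2) ℂ)
    (hE : ∀ x, IsPOVM fun a => E a x) :
    chshCorr E 0 0 + chshCorr E 0 1 + chshCorr E 1 0 - chshCorr E 1 1 ≤ 2 := by
  have hfirst := (hE 0).re_trace_sub_mul_bloch_le (α := -2 / 5) (z := 3 / 10) (x := 3 / 10)
    (Real.le_sqrt_of_sq_le (by norm_num))
  have hsecond := (hE 1).re_trace_sub_mul_bloch_le (α := 0) (z := 3 / 10) (x := -3 / 10)
    (Real.le_sqrt_of_sq_le (by norm_num))
  have hsqrt : √((3 / 10) ^ 2 + (3 / 10) ^ 2) ≤ 1 / 2 := Real.sqrt_le_iff.mpr (by norm_num)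
  calc chshCorr E 0 0 + chshCorr E 0 1 + chshCorr E 1 0 - chshCorr E 1 1
      ≤ 2 * √((3 / 10) ^ 2 + (3 / 10) ^ 2) + 2 * √((3 / 10) ^ 2 + (-3 / 10) ^ 2) :=
        (chsh_eq_re_trace_add_re_trace E).trans_le (add_le_add hfirst hsecond)
    _ = 4 * √((3 / 10) ^ 2 + (3 / 10) ^ 2) := by ring_nf
    _ ≤ 2 := by linarith
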